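/- arXiv:2102.04200 — 2 statements merged into one kernel-verified Lean document; each statement's English description precedes it below -/
import Mathlib

section
/- Let ρ > 0 and let 𝒳 be a continuous real random variable with probability density f, finite differential Rényi entropy h_α(𝒳), and finite ρ-th absolute moment θ = E[|𝒳|^ρ]. If 1/(1+ρ) < α < 1, then h_α(𝒳) ≤ (1/ρ) ln( ((1+ρ)α−1)/(1−α) · θ ) + (1/(1−α)) ln( ρα/((1+ρ)α−1) ) + ln( 2·Γ(1/ρ + 1)·Γ(1/(1−α) − 1/ρ) / Γ(1/(1−α)) ). If α > 1, then h_α(𝒳) ≤ (1/ρ) ln( ((1+ρ)α−1)/(α−1) · θ ) + (1/(α−1)) ln( ((1+ρ)α−1)/(ρα) ) + ln( 2·Γ(1/ρ + 1)·Γ(α/(α−1)) / Γ(α/(α−1) + 1/ρ) ). In either case equality holds if and only if 𝒳 is a generalized α-Gaussian, i.e., f(x) is proportional to (1 + β|x|^ρ/θ)^{1/(α−1)} restricted to where this is nonnegative, with β = (1−α)/((1+ρ)α−1). If moreover 𝒳 ≥ 0 almost surely and θ = E[𝒳^ρ], the same inequalities hold with the factor 2 inside the last logarithm removed. -/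
/-!
Let `s` be the generalized Gaussian density with `ρ`-th absolute moment `θ`. Comparing `f ^ α` with
the tangent line of the power function at `s` gives `∫ f ^ α` against `∫ s ^ α` up to the cross term
`∫ s ^ (α - 1) f`, and strict convexity (`α > 1`) or concavity (`α < 1`) gives the equality case.
Now `s ^ (α - 1)` is an affine function of `|x| ^ ρ`, truncated at `0` when `α > 1`, so the moment
condition evaluates the cross term for `α < 1` and bounds it on the favourable side for `α > 1`.

The entropy of `s` reduces to Beta integrals over the half-line. The argument only uses that the
reference measure is carried by `x ↦ |x|` to `C` times Lebesgue measure on the half-line: `C = 2` on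
the line, and `C = 1` for densities supported on the half-line.
-/

open MeasureTheory Real

open Set ProbabilityTheory

/-! ### Bregman divergence of the power function -/

/-- The gap at `t` between `x ↦ x ^ α` and its tangent line at `s`. The factor `α - 1` makes it
nonnegative both for `α > 1` (convex power) and for `0 < α < 1` (concave power). -/
noncomputable def rpowBregman (α t s : ℝ) : ℝ :=
  (α - 1) * (t ^ α - α * (s ^ (α - 1) * t) + (α - 1) * s ^ α)

section rpowBregman

variable {α t s : ℝ}

lemma rpow_sub_one_mul_self (hα : α ≠ 0) (hs : 0 ≤ s) : s ^ (α - 1) * s = s ^ α := by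
  rw [← rpow_add_one' hs (by simpa using hα), sub_add_cancel]

lemma rpowBregman_self (hα : α ≠ 0) (hs : 0 ≤ s) : rpowBregman α s s = 0 := by
  rw [rpowBregman, rpow_sub_one_mul_self hα hs]
  ring

lemma rpowBregman_eq_rpow_mul (hs : 0 < s) (ht : 0 ≤ t) :
    rpowBregman α t s =
      s ^ α * ((α - 1) * ((1 + (t / s - 1)) ^ α - (1 + α * (t / s - 1)))) := by
  rw [rpowBregman, add_sub_cancel, div_rpow ht hs.le, rpow_sub_one hs.ne']
  field_simp
  ring

lemma rpowBregman_pos (hα0 : 0 < α) (hα1 : α ≠ 1) (ht : 0 ≤ t) (hs : 0 ≤ s)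
    (hs1 : α < 1 → 0 < s) (hts : t ≠ s) : 0 < rpowBregman α t s := by
  rcases hs.eq_or_lt with rfl | hs
  · have hα : 1 < α := hα1.lt_or_gt.resolve_left fun h => lt_irrefl _ (hs1 h)
    have htα : 0 < t ^ α := rpow_pos_of_pos (ht.lt_of_ne' hts) α
    rw [rpowBregman, zero_rpow (sub_ne_zero.2 hα1), zero_rpow hα0.ne']
    nlinarith
  · have hr : -1 ≤ t / s - 1 := by linarith [div_nonneg ht hs.le]
    have hr0 : t / s - 1 ≠ 0 := by rwa [sub_ne_zero, Ne, div_eq_one_iff_eq hs.ne']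
    rw [rpowBregman_eq_rpow_mul hs ht]
    refine mul_pos (rpow_pos_of_pos hs α) ?_
    rcases hα1.lt_or_gt with hα | hα
    · exact mul_pos_of_neg_of_neg (sub_neg.2 hα)
        (sub_neg.2 (rpow_one_add_lt_one_add_mul_self hr hr0 hα0 hα))
    · exact mul_pos (sub_pos.2 hα) (sub_pos.2 (one_add_mul_self_lt_rpow_one_add hr hr0 hα))

lemma rpowBregman_nonneg (hα0 : 0 < α) (hα1 : α ≠ 1) (ht : 0 ≤ t) (hs : 0 ≤ s)
    (hs1 : α < 1 → 0 < s) : 0 ≤ rpowBregman α t s := by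
  rcases eq_or_ne t s with rfl | hts
  · exact (rpowBregman_self hα0.ne' hs).ge
  · exact (rpowBregman_pos hα0 hα1 ht hs hs1 hts).le

lemma eq_of_rpowBregman_eq_zero (hα0 : 0 < α) (hα1 : α ≠ 1) (ht : 0 ≤ t) (hs : 0 ≤ s)
    (hs1 : α < 1 → 0 < s) (h : rpowBregman α t s = 0) : t = s :=
  not_imp_comm.1 (rpowBregman_pos hα0 hα1 ht hs hs1) h.not_gt

end rpowBregman

/-! ### Comparing Rényi entropies -/

section Comparison

variable {X : Type*} [MeasurableSpace X] {μ : Measure X} {α : ℝ} {f s : X → ℝ}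

lemma integral_pos_of_ae_eq_zero_imp {E : Type*} [NormedAddCommGroup E] [NormedSpace ℝ E]
    {g : X → ℝ} {u : X → E} (hg0 : 0 ≤ᵐ[μ] g) (hg : Integrable g μ)
    (hgu : ∀ᵐ x ∂μ, g x = 0 → u x = 0) (hu : ∫ x, u x ∂μ ≠ 0) : 0 < ∫ x, g x ∂μ := by
  refine (integral_nonneg_of_ae hg0).lt_of_ne' fun hg_zero => hu ?_
  refine integral_eq_zero_of_ae ?_
  filter_upwards [(integral_eq_zero_iff_of_nonneg_ae hg0 hg).1 hg_zero, hgu] with x hx hxu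
  exact hxu hx

lemma integral_rpow_pos (hα : α ≠ 0) (hf0 : 0 ≤ᵐ[μ] f) (hf : ∫ x, f x ∂μ ≠ 0)
    (hfα : Integrable (fun x => f x ^ α) μ) : 0 < ∫ x, f x ^ α ∂μ := by
  refine integral_pos_of_ae_eq_zero_imp ?_ hfα ?_ hf <;> filter_upwards [hf0] with x hx
  · exact rpow_nonneg hx α
  · exact (rpow_eq_zero hx hα).1

lemma integrable_rpowBregman (hf : Integrable (fun x => f x ^ α) μ)
    (hs : Integrable (fun x => s x ^ α) μ) (hsf : Integrable (fun x => s x ^ (α - 1) * f x) μ) :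
    Integrable (fun x => rpowBregman α (f x) (s x)) μ :=
  ((hf.sub (hsf.const_mul α)).add (hs.const_mul (α - 1))).const_mul (α - 1)

lemma integral_rpowBregman (hf : Integrable (fun x => f x ^ α) μ)
    (hs : Integrable (fun x => s x ^ α) μ) (hsf : Integrable (fun x => s x ^ (α - 1) * f x) μ) :
    ∫ x, rpowBregman α (f x) (s x) ∂μ =
      (α - 1) * (∫ x, f x ^ α ∂μ - α * ∫ x, s x ^ (α - 1) * f x ∂μ
        + (α - 1) * ∫ x, s x ^ α ∂μ) := by
  have hsf' := hsf.const_mul α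
  have hsub : Integrable (fun x => f x ^ α - α * (s x ^ (α - 1) * f x)) μ := hf.sub hsf'
  simp only [rpowBregman]
  rw [integral_const_mul, integral_add hsub (hs.const_mul _), integral_sub hf hsf',
    integral_const_mul, integral_const_mul]

/-- The Rényi entropy `h_α` of order `α` of a density `f` with respect to `μ`. -/
noncomputable def renyiEntropy (μ : Measure X) (α : ℝ) (f : X → ℝ) : ℝ :=
  1 / (1 - α) * log (∫ x, f x ^ α ∂μ)

lemma renyiEntropy_le_iff (hα : α ≠ 1) (hf : 0 < ∫ x, f x ^ α ∂μ) (hs : 0 < ∫ x, s x ^ α ∂μ) :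
    renyiEntropy μ α f ≤ renyiEntropy μ α s ↔
      0 ≤ (α - 1) * (∫ x, f x ^ α ∂μ - ∫ x, s x ^ α ∂μ) := by
  rcases hα.lt_or_gt with hα | hα
  · rw [renyiEntropy, renyiEntropy, mul_le_mul_iff_right₀ (one_div_pos.2 (sub_pos.2 hα)),
      log_le_log_iff hf hs, ← neg_mul_neg, neg_sub, neg_sub,
      mul_nonneg_iff_of_pos_left (sub_pos.2 hα), sub_nonneg]
  · rw [renyiEntropy, renyiEntropy, mul_le_mul_left_of_neg (one_div_neg.2 (sub_neg.2 hα)),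
      log_le_log_iff hs hf, mul_nonneg_iff_of_pos_left (sub_pos.2 hα), sub_nonneg]

lemma renyiEntropy_eq_iff (hα : α ≠ 1) (hf : 0 < ∫ x, f x ^ α ∂μ) (hs : 0 < ∫ x, s x ^ α ∂μ) :
    renyiEntropy μ α f = renyiEntropy μ α s ↔ ∫ x, f x ^ α ∂μ = ∫ x, s x ^ α ∂μ := by
  rw [renyiEntropy, renyiEntropy, mul_right_inj' (one_div_ne_zero (sub_ne_zero.2 hα.symm))]
  exact log_injOn_pos.eq_iff hf hs

lemma renyiEntropy_congr_ae (h : f =ᵐ[μ] s) : renyiEntropy μ α f = renyiEntropy μ α s := by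
  have hpow : (fun x => f x ^ α) =ᵐ[μ] fun x => s x ^ α := h.fun_comp (· ^ α)
  rw [renyiEntropy, integral_congr_ae hpow, renyiEntropy]

lemma renyiEntropy_restrict (hα : α ≠ 0) {S : Set X} (hf : ∀ᵐ x ∂μ, x ∉ S → f x = 0) :
    renyiEntropy (μ.restrict S) α f = renyiEntropy μ α f := by
  rw [renyiEntropy, renyiEntropy, setIntegral_eq_integral_of_ae_compl_eq_zero]
  filter_upwards [hf] with x hx hxS
  rw [hx hxS, zero_rpow hα]

theorem renyiEntropy_le_and_eq_iff (hα0 : 0 < α) (hα1 : α ≠ 1)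
    (hf0 : 0 ≤ᵐ[μ] f) (hs0 : 0 ≤ᵐ[μ] s) (hs1 : α < 1 → ∀ᵐ x ∂μ, 0 < s x)
    (hf : 0 < ∫ x, f x ^ α ∂μ) (hs : 0 < ∫ x, s x ^ α ∂μ)
    (hsf : Integrable (fun x => s x ^ (α - 1) * f x) μ)
    (hcross : 0 ≤ (α - 1) * (∫ x, s x ^ (α - 1) * f x ∂μ - ∫ x, s x ^ α ∂μ)) :
    renyiEntropy μ α f ≤ renyiEntropy μ α s ∧
      (renyiEntropy μ α f = renyiEntropy μ α s ↔ f =ᵐ[μ] s) := by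
  have hfi := Integrable.of_integral_ne_zero hf.ne'
  have hsi := Integrable.of_integral_ne_zero hs.ne'
  have hs1' : ∀ᵐ x ∂μ, α < 1 → 0 < s x := Filter.eventually_imp_distrib_left.2 hs1
  have hD0 : 0 ≤ᵐ[μ] fun x => rpowBregman α (f x) (s x) := by
    filter_upwards [hf0, hs0, hs1'] with x hfx hsx hsx1
    exact rpowBregman_nonneg hα0 hα1 hfx hsx hsx1
  have hD_le : ∫ x, rpowBregman α (f x) (s x) ∂μ ≤
      (α - 1) * (∫ x, f x ^ α ∂μ - ∫ x, s x ^ α ∂μ) := by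
    rw [integral_rpowBregman hfi hsi hsf]
    linarith [mul_nonneg hα0.le hcross]
  refine ⟨(renyiEntropy_le_iff hα1 hf hs).2 ((integral_nonneg_of_ae hD0).trans hD_le),
    fun h => ?_, renyiEntropy_congr_ae⟩
  rw [(renyiEntropy_eq_iff hα1 hf hs).1 h, sub_self, mul_zero] at hD_le
  have hD := (integral_eq_zero_iff_of_nonneg_ae hD0 (integrable_rpowBregman hfi hsi hsf)).1
    (hD_le.antisymm (integral_nonneg_of_ae hD0))
  filter_upwards [hf0, hs0, hs1', hD] with x hfx hsx hsx1 hDx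
  exact eq_of_rpowBregman_eq_zero hα0 hα1 hfx hsx hsx1 hDx

end Comparison

/-! ### Densities proportional to a power -/

/-- The probability density proportional to `w ^ r`. -/
noncomputable def powDensity {X : Type*} [MeasurableSpace X] (μ : Measure X) (w : X → ℝ) (r : ℝ)
    (x : X) : ℝ :=
  (∫ y, w y ^ r ∂μ)⁻¹ * w x ^ r

section powDensity

variable {X : Type*} [MeasurableSpace X] {μ : Measure X} {α : ℝ} {f w : X → ℝ}

lemma ae_eq_powDensity_iff {r : ℝ} (hf : ∫ x, f x ∂μ = 1) (hw : 0 < ∫ x, w x ^ r ∂μ) :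
    f =ᵐ[μ] powDensity μ w r ↔ ∃ c > 0, f =ᵐ[μ] fun x => c * w x ^ r := by
  refine ⟨fun h => ⟨_, inv_pos.2 hw, h⟩, fun ⟨c, _, hc⟩ => ?_⟩
  have hcw : c * ∫ x, w x ^ r ∂μ = 1 := by
    rw [← integral_const_mul, ← integral_congr_ae hc, hf]
  rwa [eq_inv_of_mul_eq_one_left hcw] at hc

lemma powDensity_rpow {x : X} (hw : 0 ≤ w x) (hN : 0 ≤ ∫ y, w y ^ (1 / (α - 1)) ∂μ) (r : ℝ) :
    powDensity μ w (1 / (α - 1)) x ^ r =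
      (∫ y, w y ^ (1 / (α - 1)) ∂μ) ^ (-r) * w x ^ (r / (α - 1)) := by
  rw [powDensity, mul_rpow (inv_nonneg.2 hN) (rpow_nonneg hw _), inv_rpow hN, ← rpow_neg hN,
    ← rpow_mul hw, one_div_mul_eq_div]

lemma integral_powDensity_rpow (hw : 0 ≤ w) (r : ℝ) :
    ∫ x, powDensity μ w (1 / (α - 1)) x ^ r ∂μ =
      (∫ x, w x ^ (1 / (α - 1)) ∂μ) ^ (-r) * ∫ x, w x ^ (r / (α - 1)) ∂μ := by
  have hN : 0 ≤ ∫ y, w y ^ (1 / (α - 1)) ∂μ := integral_nonneg fun y => rpow_nonneg (hw y) _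
  simp_rw [fun x => powDensity_rpow (hw x) hN r, integral_const_mul]

lemma renyiEntropy_powDensity (hα : α ≠ 1) (hw : 0 ≤ w) (hN : 0 < ∫ x, w x ^ (1 / (α - 1)) ∂μ)
    (hG : 0 < ∫ x, w x ^ (α / (α - 1)) ∂μ) :
    renyiEntropy μ α (powDensity μ w (1 / (α - 1))) =
      log (∫ x, w x ^ (1 / (α - 1)) ∂μ) + 1 / (1 - α) *
        log ((∫ x, w x ^ (α / (α - 1)) ∂μ) / ∫ x, w x ^ (1 / (α - 1)) ∂μ) := by
  have hα' : 1 - α ≠ 0 := sub_ne_zero.2 hα.symm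
  rw [renyiEntropy, integral_powDensity_rpow hw, log_mul (by positivity) hG.ne', log_rpow hN,
    log_div hG.ne' hN.ne']
  field_simp
  ring

/-- The quotient in `hcross` is the value of `∫ w f` at the density `f` proportional to
`w ^ (1 / (α - 1))`, the one for which `f ^ (α - 1)` is proportional to `w`. -/
theorem renyiEntropy_le_powDensity_and_eq_iff (hα0 : 0 < α) (hα1 : α ≠ 1)
    (hf0 : 0 ≤ᵐ[μ] f) (hf : 0 < ∫ x, f x ^ α ∂μ) (hw0 : 0 ≤ w) (hw1 : α < 1 → ∀ x, 0 < w x)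
    (hN : 0 < ∫ x, w x ^ (1 / (α - 1)) ∂μ) (hG : 0 < ∫ x, w x ^ (α / (α - 1)) ∂μ)
    (hwf : Integrable (fun x => w x * f x) μ)
    (hcross : 0 ≤ (α - 1) * (∫ x, w x * f x ∂μ -
      (∫ x, w x ^ (α / (α - 1)) ∂μ) / ∫ x, w x ^ (1 / (α - 1)) ∂μ)) :
    renyiEntropy μ α f ≤ renyiEntropy μ α (powDensity μ w (1 / (α - 1))) ∧
      (renyiEntropy μ α f = renyiEntropy μ α (powDensity μ w (1 / (α - 1))) ↔
        f =ᵐ[μ] powDensity μ w (1 / (α - 1))) := by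
  set N := ∫ x, w x ^ (1 / (α - 1)) ∂μ with hN_def
  set G := ∫ x, w x ^ (α / (α - 1)) ∂μ with hG_def
  have hs_pow : (fun x => powDensity μ w (1 / (α - 1)) x ^ (α - 1) * f x) =
      fun x => N ^ (1 - α) * (w x * f x) := by
    funext x
    rw [powDensity_rpow (hw0 x) hN.le, div_self (sub_ne_zero.2 hα1), rpow_one, neg_sub, mul_assoc]
  have hN_pow : N ^ (-α) = N ^ (1 - α) / N := by
    rw [← rpow_sub_one hN.ne']
    ring_nf
  refine renyiEntropy_le_and_eq_iff hα0 hα1 hf0 (.of_forall fun x => ?_)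
    (fun h => .of_forall fun x => ?_) hf ?_ ?_ ?_
  · exact mul_nonneg (inv_nonneg.2 hN.le) (rpow_nonneg (hw0 x) _)
  · exact mul_pos (inv_pos.2 hN) (rpow_pos_of_pos (hw1 h x) _)
  · rw [integral_powDensity_rpow hw0]
    positivity
  · rw [hs_pow]
    exact hwf.const_mul _
  · rw [hs_pow, integral_const_mul, integral_powDensity_rpow hw0, ← hN_def, ← hG_def, hN_pow]
    calc 0 ≤ N ^ (1 - α) * ((α - 1) * (∫ x, w x * f x ∂μ - G / N)) := by positivity
      _ = _ := by ring

end powDensity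

/-! ### Beta integrals -/

section Beta

variable {a b : ℝ}

lemma lintegral_rpow_mul_exp_neg_mul_Ioi {r : ℝ} (ha : 0 < a) (hr : 0 < r) :
    ∫⁻ t in Ioi 0, ENNReal.ofReal (t ^ (a - 1) * exp (-(r * t))) =
      ENNReal.ofReal (r ^ (-a) * Gamma a) := by
  have hint : ∫ t in Ioi 0, t ^ (a - 1) * exp (-(r * t)) = r ^ (-a) * Gamma a := by
    rw [integral_rpow_mul_exp_neg_mul_Ioi ha hr, one_div, inv_rpow hr.le, rpow_neg hr.le]
  rw [← hint, ofReal_integral_eq_lintegral_ofReal]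
  · exact .of_integral_ne_zero (by rw [hint]; positivity)
  · filter_upwards [ae_restrict_mem measurableSet_Ioi] with t ht
    exact mul_nonneg (rpow_nonneg (le_of_lt ht) _) (exp_nonneg _)

/-- Both orders of integrating `t ^ (a - 1) * s ^ (a + b - 1) * exp (-(1 + t) * s)` over the
quadrant are Gamma integrals in the inner and in the outer variable. -/
lemma lintegral_rpow_mul_one_add_rpow_Ioi (ha : 0 < a) (hb : 0 < b) :
    ∫⁻ t in Ioi (0 : ℝ), ENNReal.ofReal (t ^ (a - 1) * ((1 + t) ^ (-(a + b)) * Gamma (a + b))) =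
      ENNReal.ofReal (Gamma a * Gamma b) := by
  have h_inner_s : ∀ t ∈ Ioi (0 : ℝ),
      ENNReal.ofReal (t ^ (a - 1) * ((1 + t) ^ (-(a + b)) * Gamma (a + b))) =
        ∫⁻ s in Ioi (0 : ℝ), ENNReal.ofReal (t ^ (a - 1)) *
          ENNReal.ofReal (s ^ (a + b - 1) * exp (-((1 + t) * s))) := fun t (ht : 0 < t) => by
    rw [lintegral_const_mul _ (by fun_prop),
      lintegral_rpow_mul_exp_neg_mul_Ioi (add_pos ha hb) (by positivity),
      ENNReal.ofReal_mul (by positivity)]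
  have h_inner_t : ∀ s ∈ Ioi (0 : ℝ),
      ∫⁻ t in Ioi (0 : ℝ), ENNReal.ofReal (t ^ (a - 1)) *
          ENNReal.ofReal (s ^ (a + b - 1) * exp (-((1 + t) * s))) =
        ENNReal.ofReal (Gamma a) * ENNReal.ofReal (s ^ (b - 1) * exp (-(1 * s))) :=
      fun s (hs : 0 < s) => by
    have h_split : ∀ t ∈ Ioi (0 : ℝ), ENNReal.ofReal (t ^ (a - 1)) *
          ENNReal.ofReal (s ^ (a + b - 1) * exp (-((1 + t) * s))) =
        ENNReal.ofReal (s ^ (a + b - 1) * exp (-(1 * s))) *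
          ENNReal.ofReal (t ^ (a - 1) * exp (-(s * t))) := fun t (ht : 0 < t) => by
      rw [← ENNReal.ofReal_mul (by positivity), ← ENNReal.ofReal_mul (by positivity),
        show -((1 + t) * s) = -(1 * s) + -(s * t) by ring, exp_add]
      ring_nf
    rw [setLIntegral_congr_fun measurableSet_Ioi h_split, lintegral_const_mul _ (by fun_prop),
      lintegral_rpow_mul_exp_neg_mul_Ioi ha hs, ← ENNReal.ofReal_mul (by positivity),
      ← ENNReal.ofReal_mul (Gamma_pos_of_pos ha).le,
      show b - 1 = a + b - 1 + -a by ring, rpow_add hs]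
    ring_nf
  rw [setLIntegral_congr_fun measurableSet_Ioi h_inner_s,
    lintegral_lintegral_swap
      (Measurable.aemeasurable (by unfold Function.uncurry; fun_prop)),
    setLIntegral_congr_fun measurableSet_Ioi h_inner_t, lintegral_const_mul _ (by fun_prop),
    lintegral_rpow_mul_exp_neg_mul_Ioi hb one_pos, one_rpow, one_mul,
    ENNReal.ofReal_mul (Gamma_pos_of_pos ha).le]

lemma integral_rpow_mul_one_add_rpow_Ioi (ha : 0 < a) (hb : 0 < b) :
    ∫ t in Ioi (0 : ℝ), t ^ (a - 1) * (1 + t) ^ (-(a + b)) = beta a b := by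
  have hGab := Gamma_pos_of_pos (add_pos ha hb)
  rw [beta, eq_div_iff hGab.ne', ← integral_mul_const]
  simp_rw [mul_assoc]
  rw [integral_eq_lintegral_of_nonneg_ae _ (Measurable.aestronglyMeasurable (by fun_prop)),
    lintegral_rpow_mul_one_add_rpow_Ioi ha hb, ENNReal.toReal_ofReal (by positivity)]
  filter_upwards [ae_restrict_mem measurableSet_Ioi] with t (ht : 0 < t)
  simp only [Pi.zero_apply]
  positivity

lemma integral_betaPDFReal (ha : 0 < a) (hb : 0 < b) : ∫ x, betaPDFReal a b x = 1 := by
  rw [integral_eq_lintegral_of_nonneg_ae _ (measurable_betaPDFReal a b).aestronglyMeasurable]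
  · exact (congrArg ENNReal.toReal (lintegral_betaPDF_eq_one ha hb)).trans ENNReal.toReal_one
  · refine .of_forall fun x => ?_
    by_cases hx : 0 < x ∧ x < 1
    · exact (betaPDFReal_pos hx.1 hx.2 ha hb).le
    · simp [betaPDFReal, hx]

lemma integral_rpow_mul_max_one_sub_rpow_Ioi (ha : 0 < a) (hb : 1 < b) :
    ∫ t in Ioi (0 : ℝ), t ^ (a - 1) * max (1 - t) 0 ^ (b - 1) = beta a b := by
  have hb0 : 0 < b := one_pos.trans hb
  have h_pdf : (Ioi (0 : ℝ)).indicator (fun t => t ^ (a - 1) * max (1 - t) 0 ^ (b - 1)) =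
      fun t => beta a b * betaPDFReal a b t := by
    funext t
    rcases le_or_gt t 0 with ht0 | ht0
    · simp [betaPDFReal, ht0.not_gt]
    rcases lt_or_ge t 1 with ht1 | ht1
    · have := (beta_pos ha hb0).ne'
      simp only [betaPDFReal, mem_Ioi, ht0, indicator_of_mem, ht1, and_self, if_true,
        max_eq_left (sub_pos.2 ht1).le]
      field_simp
    · simp [betaPDFReal, ht0, ht1.not_gt, max_eq_right (sub_nonpos.2 ht1),
        zero_rpow (sub_pos.2 hb).ne']
  rw [← integral_indicator measurableSet_Ioi, h_pdf, integral_const_mul,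
    integral_betaPDFReal ha hb0, mul_one]

lemma integral_comp_mul_rpow_Ioi {E : Type*} [NormedAddCommGroup E] [NormedSpace ℝ E]
    (φ : ℝ → E) {ρ b : ℝ} (hρ : 0 < ρ) (hb : 0 < b) :
    ∫ y in Ioi (0 : ℝ), φ (b * y ^ ρ) =
      (b ^ (-1 / ρ) * (1 / ρ)) • ∫ t in Ioi (0 : ℝ), t ^ (1 / ρ - 1) • φ t := by
  have h_scale := integral_comp_mul_left_Ioi (fun t => t ^ (1 / ρ - 1) • φ t) 0 hb
  rw [mul_zero] at h_scale
  rw [← inv_smul_eq_iff₀ (by positivity)] at h_scale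
  rw [← h_scale, inv_inv, ← integral_comp_rpow_Ioi_of_pos (one_div_pos.2 hρ), smul_smul,
    ← integral_smul]
  refine setIntegral_congr_fun measurableSet_Ioi fun u (hu : 0 < u) => ?_
  have hb_pow : b ^ (-1 / ρ) * b * b ^ (1 / ρ - 1) = 1 := by
    rw [← rpow_add_one hb.ne', ← rpow_add hb]
    ring_nf
    simp
  simp only [smul_smul]
  rw [← rpow_mul hu.le, one_div_mul_cancel hρ.ne', rpow_one, mul_rpow hb.le hu.le]
  congr 1
  linear_combination -(1 / ρ * u ^ (1 / ρ - 1)) * hb_pow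

end Beta

/-! ### Moments on the line and on the half-line -/

/-- `μ` is pushed forward by `x ↦ |x|` to `C` times Lebesgue measure on the half-line. Phrased
through Bochner integrals of arbitrary functions, which are `0` on both sides without
integrability. -/
def FoldsToHalfLine (μ : Measure ℝ) (C : ℝ) : Prop :=
  ∀ φ : ℝ → ℝ, ∫ x, φ |x| ∂μ = C * ∫ y in Ioi (0 : ℝ), φ y

lemma foldsToHalfLine_volume : FoldsToHalfLine volume 2 :=
  fun _ => integral_comp_abs

lemma foldsToHalfLine_restrict_Ioi : FoldsToHalfLine (volume.restrict (Ioi 0)) 1 := fun φ => by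
  rw [one_mul]
  exact setIntegral_congr_fun measurableSet_Ioi fun x (hx : 0 < x) => by rw [abs_of_pos hx]

lemma FoldsToHalfLine.integral_comp_mul_rpow {μ : Measure ℝ} {C ρ b : ℝ}
    (hμ : FoldsToHalfLine μ C) (φ : ℝ → ℝ) (hρ : 0 < ρ) (hb : 0 < b) :
    ∫ x, φ (b * |x| ^ ρ) ∂μ =
      b ^ (-1 / ρ) * (C * (1 / ρ) * ∫ t in Ioi (0 : ℝ), t ^ (1 / ρ - 1) * φ t) := by
  rw [hμ fun y => φ (b * y ^ ρ), integral_comp_mul_rpow_Ioi φ hρ hb]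
  simp only [smul_eq_mul]
  ring

lemma integral_abs_rpow_mul_pos {μ : Measure ℝ} [NullSingletonClass μ] {ρ : ℝ} {f : ℝ → ℝ}
    (hf0 : 0 ≤ᵐ[μ] f) (hf : ∫ x, f x ∂μ ≠ 0) (hfρ : Integrable (fun x => |x| ^ ρ * f x) μ) :
    0 < ∫ x, |x| ^ ρ * f x ∂μ := by
  refine integral_pos_of_ae_eq_zero_imp ?_ hfρ ?_ hf
  · filter_upwards [hf0] with x hx
    exact mul_nonneg (rpow_nonneg (abs_nonneg x) ρ) hx
  · filter_upwards [Measure.ae_ne μ 0] with x hx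
    exact (mul_eq_zero_iff_left (rpow_pos_of_pos (abs_pos.2 hx) ρ).ne').1

/-- The truncated power profile `(1 + b |x| ^ ρ)₊`, a power of which is the density of a generalized
Gaussian: heavy-tailed for `b > 0`, compactly supported for `b < 0`. -/
noncomputable def powerProfile (ρ b x : ℝ) : ℝ :=
  max (1 + b * |x| ^ ρ) 0

section powerProfile

variable {μ : Measure ℝ} {C ρ b q : ℝ}

lemma powerProfile_nonneg (ρ b x : ℝ) : 0 ≤ powerProfile ρ b x :=
  le_max_right _ _

lemma powerProfile_of_nonneg (hb : 0 ≤ b) (x : ℝ) : powerProfile ρ b x = 1 + b * |x| ^ ρ :=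
  max_eq_left (by positivity)

lemma powerProfile_pos (hb : 0 ≤ b) (x : ℝ) : 0 < powerProfile ρ b x := by
  rw [powerProfile_of_nonneg hb]
  positivity

lemma powerProfile_mul {y : ℝ} (hy : 0 ≤ y) (x : ℝ) :
    powerProfile ρ b x * y = max (y + b * (|x| ^ ρ * y)) 0 := by
  rw [powerProfile, max_mul_of_nonneg _ _ hy, zero_mul]
  ring_nf

section Moment

variable {f : ℝ → ℝ}

lemma integrable_powerProfile_mul (hf0 : 0 ≤ᵐ[μ] f) (hf : Integrable f μ)
    (hfρ : Integrable (fun x => |x| ^ ρ * f x) μ) :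
    Integrable (fun x => powerProfile ρ b x * f x) μ := by
  refine (hf.add (hfρ.const_mul b)).pos_part.congr ?_
  filter_upwards [hf0] with x hx
  exact (powerProfile_mul hx x).symm

lemma integral_add_le_integral_powerProfile_mul (hf0 : 0 ≤ᵐ[μ] f) (hf : Integrable f μ)
    (hfρ : Integrable (fun x => |x| ^ ρ * f x) μ) :
    ∫ x, f x ∂μ + b * ∫ x, |x| ^ ρ * f x ∂μ ≤ ∫ x, powerProfile ρ b x * f x ∂μ := by
  rw [← integral_const_mul, ← integral_add hf (hfρ.const_mul b)]
  refine integral_mono_ae (hf.add (hfρ.const_mul b)) (integrable_powerProfile_mul hf0 hf hfρ) ?_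
  filter_upwards [hf0] with x hx
  rw [powerProfile_mul hx]
  exact le_max_left _ _

lemma integral_powerProfile_mul_of_nonneg (hb : 0 ≤ b) (hf : Integrable f μ)
    (hfρ : Integrable (fun x => |x| ^ ρ * f x) μ) :
    ∫ x, powerProfile ρ b x * f x ∂μ = ∫ x, f x ∂μ + b * ∫ x, |x| ^ ρ * f x ∂μ := by
  simp_rw [powerProfile_of_nonneg hb, add_mul, one_mul, mul_assoc]
  rw [integral_add hf (hfρ.const_mul b), integral_const_mul]

end Moment

lemma FoldsToHalfLine.integral_powerProfile_rpow_of_pos (hμ : FoldsToHalfLine μ C) (hρ : 0 < ρ)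
    (hb : 0 < b) (hq : 1 / ρ < -q) :
    ∫ x, powerProfile ρ b x ^ q ∂μ =
      b ^ (-1 / ρ) * (C * Gamma (1 / ρ + 1) * Gamma (-q - 1 / ρ) / Gamma (-q)) := by
  have h_beta : ∫ t in Ioi (0 : ℝ), t ^ (1 / ρ - 1) * max (1 + t) 0 ^ q =
      beta (1 / ρ) (-q - 1 / ρ) := by
    rw [← integral_rpow_mul_one_add_rpow_Ioi (one_div_pos.2 hρ) (sub_pos.2 hq)]
    refine setIntegral_congr_fun measurableSet_Ioi fun t (ht : 0 < t) => ?_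
    simp only [max_eq_left (add_pos one_pos ht).le]
    ring_nf
  have h_fold := hμ.integral_comp_mul_rpow (fun t => max (1 + t) 0 ^ q) hρ hb
  simp only [powerProfile]
  rw [h_fold, h_beta, beta, Gamma_add_one (one_div_ne_zero hρ.ne'), add_sub_cancel]
  ring

lemma FoldsToHalfLine.integral_powerProfile_rpow_of_neg (hμ : FoldsToHalfLine μ C) (hρ : 0 < ρ)
    (hb : b < 0) (hq : 0 < q) :
    ∫ x, powerProfile ρ b x ^ q ∂μ =
      (-b) ^ (-1 / ρ) * (C * Gamma (1 / ρ + 1) * Gamma (q + 1) / Gamma (q + 1 + 1 / ρ)) := by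
  have h_beta := integral_rpow_mul_max_one_sub_rpow_Ioi (one_div_pos.2 hρ)
    (lt_add_of_pos_left 1 hq)
  have h_fold := hμ.integral_comp_mul_rpow (fun t => max (1 - t) 0 ^ q) hρ (neg_pos.2 hb)
  simp only [neg_mul, sub_neg_eq_add] at h_fold
  rw [add_sub_cancel_right] at h_beta
  simp only [powerProfile]
  rw [h_fold, h_beta, beta, Gamma_add_one (one_div_ne_zero hρ.ne'), add_comm (1 / ρ)]
  ring

lemma FoldsToHalfLine.integral_powerProfile_rpow_add_one_of_pos (hμ : FoldsToHalfLine μ C)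
    (hρ : 0 < ρ) (hb : 0 < b) (hq : 1 / ρ < -(q + 1)) :
    ∫ x, powerProfile ρ b x ^ (q + 1) ∂μ =
      (q + 1) / (q + 1 + 1 / ρ) * ∫ x, powerProfile ρ b x ^ q ∂μ := by
  have hρ' := one_div_pos.2 hρ
  have hq0 : -(q + 1) ≠ 0 := (hρ'.trans hq).ne'
  have hqρ : -(q + 1) - 1 / ρ ≠ 0 := (sub_pos.2 hq).ne'
  rw [hμ.integral_powerProfile_rpow_of_pos hρ hb hq,
    hμ.integral_powerProfile_rpow_of_pos hρ hb (by linarith),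
    show -q - 1 / ρ = -(q + 1) - 1 / ρ + 1 by ring, show -q = -(q + 1) + 1 by ring,
    Gamma_add_one hq0, Gamma_add_one hqρ, ← neg_div_neg_eq (q + 1), neg_add' (q + 1)]
  have := (Gamma_pos_of_pos (hρ'.trans hq)).ne'
  generalize -(q + 1) = p at *
  generalize p - 1 / ρ = r at *
  field_simp

lemma FoldsToHalfLine.integral_powerProfile_rpow_add_one_of_neg (hμ : FoldsToHalfLine μ C)
    (hρ : 0 < ρ) (hb : b < 0) (hq : 0 < q) :
    ∫ x, powerProfile ρ b x ^ (q + 1) ∂μ =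
      (q + 1) / (q + 1 + 1 / ρ) * ∫ x, powerProfile ρ b x ^ q ∂μ := by
  have hq1 : 0 < q + 1 := by positivity
  have hqρ : 0 < q + 1 + 1 / ρ := by positivity
  rw [hμ.integral_powerProfile_rpow_of_neg hρ hb hq,
    hμ.integral_powerProfile_rpow_of_neg hρ hb hq1, add_right_comm (q + 1) 1,
    Gamma_add_one hq1.ne', Gamma_add_one hqρ.ne']
  have := (Gamma_pos_of_pos hqρ).ne'
  field_simp

end powerProfile

/-! ### The generalized Gaussian -/

/-- The coefficient `β` of the generalized `α`-Gaussian. -/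
noncomputable def alphaGaussianCoeff (ρ α : ℝ) : ℝ :=
  (1 - α) / ((1 + ρ) * α - 1)

/-- The profile `(1 + β |x| ^ ρ / θ)₊` whose power `1 / (α - 1)` is proportional to the density of
the generalized `α`-Gaussian with `ρ`-th absolute moment `θ`. -/
noncomputable def alphaProfile (ρ α θ : ℝ) : ℝ → ℝ :=
  powerProfile ρ (alphaGaussianCoeff ρ α / θ)

/-- The density with respect to `μ` of the generalized `α`-Gaussian with `ρ`-th absolute moment
`θ`; taking `μ` to be Lebesgue measure on the half-line gives its one-sided version. -/
noncomputable def alphaGaussian (μ : Measure ℝ) (ρ α θ : ℝ) : ℝ → ℝ :=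
  powDensity μ (alphaProfile ρ α θ) (1 / (α - 1))

section alphaGaussian

variable {μ : Measure ℝ} {C ρ α θ : ℝ}

lemma alphaGaussianCoeff_pos (hα : 1 < (1 + ρ) * α) (hα1 : α < 1) : 0 < alphaGaussianCoeff ρ α :=
  div_pos (sub_pos.2 hα1) (sub_pos.2 hα)

lemma alphaGaussianCoeff_neg (hα : 1 < (1 + ρ) * α) (hα1 : 1 < α) : alphaGaussianCoeff ρ α < 0 :=
  div_neg_of_neg_of_pos (sub_neg.2 hα1) (sub_pos.2 hα)

lemma pos_of_one_lt_one_add_mul (hρ : 0 < ρ) (hα : 1 < (1 + ρ) * α) : 0 < α :=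
  pos_of_mul_pos_right (one_pos.trans hα) (by positivity)

lemma one_add_alphaGaussianCoeff (hα : 1 < (1 + ρ) * α) :
    1 + alphaGaussianCoeff ρ α = ρ * α / ((1 + ρ) * α - 1) := by
  have := (sub_pos.2 hα).ne'
  rw [alphaGaussianCoeff, eq_div_iff this, add_mul, div_mul_cancel₀ _ this]
  ring

lemma one_add_alphaGaussianCoeff_pos (hρ : 0 < ρ) (hα : 1 < (1 + ρ) * α) :
    0 < 1 + alphaGaussianCoeff ρ α := by
  rw [one_add_alphaGaussianCoeff hα]
  exact div_pos (mul_pos hρ (pos_of_one_lt_one_add_mul hρ hα)) (sub_pos.2 hα)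

lemma one_div_lt_neg_one_div_sub_one_add_one (hρ : 0 < ρ) (hα : 1 < (1 + ρ) * α) (hα1 : α < 1) :
    1 / ρ < -(1 / (α - 1) + 1) := by
  have hα' : 0 < 1 - α := sub_pos.2 hα1
  rw [← neg_sub 1 α, one_div_neg_eq_neg_one_div, neg_add', neg_neg, lt_sub_iff_add_lt,
    div_add_one hρ.ne', div_lt_div_iff₀ hρ hα']
  linarith

lemma one_div_sub_one_add_one (hα1 : α ≠ 1) : 1 / (α - 1) + 1 = α / (α - 1) := by
  rw [div_add_one (sub_ne_zero.2 hα1), add_sub_cancel]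

lemma one_add_alphaGaussianCoeff_eq_div (hρ : 0 < ρ) (hα : 1 < (1 + ρ) * α) (hα1 : α ≠ 1) :
    1 + alphaGaussianCoeff ρ α = α / (α - 1) / (α / (α - 1) + 1 / ρ) := by
  have hα1' := sub_ne_zero.2 hα1
  have h_add : α / (α - 1) + 1 / ρ = ((1 + ρ) * α - 1) / (ρ * (α - 1)) := by
    field_simp
    ring
  rw [one_add_alphaGaussianCoeff hα, h_add, ← mul_div_mul_left α (α - 1) hρ.ne',
    div_div_div_cancel_right₀ (by positivity)]

lemma alphaProfile_apply (ρ α θ x : ℝ) :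
    alphaProfile ρ α θ x = max (1 + (1 - α) / ((1 + ρ) * α - 1) * |x| ^ ρ / θ) 0 := by
  rw [alphaProfile, powerProfile, alphaGaussianCoeff, div_mul_eq_mul_div _ θ]

lemma alphaProfile_nonneg (ρ α θ : ℝ) : 0 ≤ alphaProfile ρ α θ :=
  powerProfile_nonneg ρ _

lemma alphaProfile_pos (hα : 1 < (1 + ρ) * α) (hα1 : α < 1) (hθ : 0 < θ) (x : ℝ) :
    0 < alphaProfile ρ α θ x :=
  powerProfile_pos (div_pos (alphaGaussianCoeff_pos hα hα1) hθ).le x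

lemma FoldsToHalfLine.integral_alphaProfile_rpow (hμ : FoldsToHalfLine μ C) (hρ : 0 < ρ)
    (hα : 1 < (1 + ρ) * α) (hα1 : α ≠ 1) (hθ : 0 < θ) :
    ∫ x, alphaProfile ρ α θ x ^ (α / (α - 1)) ∂μ =
      (1 + alphaGaussianCoeff ρ α) * ∫ x, alphaProfile ρ α θ x ^ (1 / (α - 1)) ∂μ := by
  rw [one_add_alphaGaussianCoeff_eq_div hρ hα hα1, ← one_div_sub_one_add_one hα1]
  rcases hα1.lt_or_gt with hα1 | hα1
  · exact hμ.integral_powerProfile_rpow_add_one_of_pos hρ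
      (div_pos (alphaGaussianCoeff_pos hα hα1) hθ)
      (one_div_lt_neg_one_div_sub_one_add_one hρ hα hα1)
  · exact hμ.integral_powerProfile_rpow_add_one_of_neg hρ
      (div_neg_of_neg_of_pos (alphaGaussianCoeff_neg hα hα1) hθ) (one_div_pos.2 (sub_pos.2 hα1))

lemma FoldsToHalfLine.integral_alphaProfile_of_lt_one (hμ : FoldsToHalfLine μ C) (hρ : 0 < ρ)
    (hα : 1 < (1 + ρ) * α) (hα1 : α < 1) (hθ : 0 < θ) :
    ∫ x, alphaProfile ρ α θ x ^ (1 / (α - 1)) ∂μ =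
      (((1 + ρ) * α - 1) / (1 - α) * θ) ^ (1 / ρ) *
        (C * Gamma (1 / ρ + 1) * Gamma (1 / (1 - α) - 1 / ρ) / Gamma (1 / (1 - α))) := by
  have hb := div_pos (alphaGaussianCoeff_pos hα hα1) hθ
  have hb_inv : (alphaGaussianCoeff ρ α / θ)⁻¹ = ((1 + ρ) * α - 1) / (1 - α) * θ := by
    rw [alphaGaussianCoeff, inv_div, div_div_eq_mul_div, div_mul_eq_mul_div, mul_comm]
  have hq := one_div_lt_neg_one_div_sub_one_add_one hρ hα hα1
  simp only [alphaProfile]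
  rw [hμ.integral_powerProfile_rpow_of_pos hρ hb (by linarith), neg_div, rpow_neg hb.le,
    ← inv_rpow hb.le, hb_inv, ← one_div_neg_eq_neg_one_div, neg_sub]

lemma FoldsToHalfLine.integral_alphaProfile_of_one_lt (hμ : FoldsToHalfLine μ C) (hρ : 0 < ρ)
    (hα : 1 < (1 + ρ) * α) (hα1 : 1 < α) (hθ : 0 < θ) :
    ∫ x, alphaProfile ρ α θ x ^ (1 / (α - 1)) ∂μ =
      (((1 + ρ) * α - 1) / (α - 1) * θ) ^ (1 / ρ) *
        (C * Gamma (1 / ρ + 1) * Gamma (α / (α - 1)) / Gamma (α / (α - 1) + 1 / ρ)) := by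
  have hb := div_neg_of_neg_of_pos (alphaGaussianCoeff_neg hα hα1) hθ
  have hb_inv : (-(alphaGaussianCoeff ρ α / θ))⁻¹ = ((1 + ρ) * α - 1) / (α - 1) * θ := by
    rw [alphaGaussianCoeff, ← neg_div, ← neg_div, neg_sub, inv_div, div_div_eq_mul_div,
      div_mul_eq_mul_div, mul_comm]
  have hb' := (neg_pos.2 hb).le
  simp only [alphaProfile]
  rw [hμ.integral_powerProfile_rpow_of_neg hρ hb (one_div_pos.2 (sub_pos.2 hα1)), neg_div,
    rpow_neg hb', ← inv_rpow hb', hb_inv, one_div_sub_one_add_one hα1.ne']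

lemma FoldsToHalfLine.integral_alphaProfile_pos (hμ : FoldsToHalfLine μ C) (hC : 0 < C)
    (hρ : 0 < ρ) (hα : 1 < (1 + ρ) * α) (hα1 : α ≠ 1) (hθ : 0 < θ) :
    0 < ∫ x, alphaProfile ρ α θ x ^ (1 / (α - 1)) ∂μ := by
  have : 0 < (1 + ρ) * α - 1 := sub_pos.2 hα
  rcases hα1.lt_or_gt with hα1 | hα1
  · have : 0 < 1 - α := sub_pos.2 hα1
    have hq := one_div_lt_neg_one_div_sub_one_add_one hρ hα hα1
    have hΓ : 0 < 1 / (1 - α) - 1 / ρ := by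
      rw [← neg_sub α, one_div_neg_eq_neg_one_div]
      linarith
    rw [hμ.integral_alphaProfile_of_lt_one hρ hα hα1 hθ]
    positivity
  · have : 0 < α - 1 := sub_pos.2 hα1
    rw [hμ.integral_alphaProfile_of_one_lt hρ hα hα1 hθ]
    positivity

lemma FoldsToHalfLine.integral_alphaProfile_rpow_pos (hμ : FoldsToHalfLine μ C) (hC : 0 < C)
    (hρ : 0 < ρ) (hα : 1 < (1 + ρ) * α) (hα1 : α ≠ 1) (hθ : 0 < θ) :
    0 < ∫ x, alphaProfile ρ α θ x ^ (α / (α - 1)) ∂μ := by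
  rw [hμ.integral_alphaProfile_rpow hρ hα hα1 hθ]
  exact mul_pos (one_add_alphaGaussianCoeff_pos hρ hα)
    (hμ.integral_alphaProfile_pos hC hρ hα hα1 hθ)

/-- For `α < 1` the profile is not truncated and equality holds; for `α > 1` truncation can only
increase `∫ w f`. -/
lemma sub_one_mul_integral_alphaProfile_mul_sub_nonneg {f : ℝ → ℝ} (hα : 1 < (1 + ρ) * α)
    (hα1 : α ≠ 1) (hf0 : 0 ≤ᵐ[μ] f) (hf : ∫ x, f x ∂μ = 1) (hfθ : ∫ x, |x| ^ ρ * f x ∂μ = θ)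
    (hθ : 0 < θ) :
    0 ≤ (α - 1) * (∫ x, alphaProfile ρ α θ x * f x ∂μ - (1 + alphaGaussianCoeff ρ α)) := by
  have hfi : Integrable f μ := .of_integral_ne_zero (hf ▸ one_ne_zero)
  have hfρ : Integrable (fun x => |x| ^ ρ * f x) μ := .of_integral_ne_zero (hfθ ▸ hθ.ne')
  have h_moment : 1 + alphaGaussianCoeff ρ α =
      ∫ x, f x ∂μ + alphaGaussianCoeff ρ α / θ * ∫ x, |x| ^ ρ * f x ∂μ := by
    rw [hf, hfθ, div_mul_cancel₀ _ hθ.ne']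
  rw [h_moment]
  rcases hα1.lt_or_gt with hα1 | hα1
  · refine (mul_eq_zero_of_right _ (sub_eq_zero.2 ?_)).ge
    exact integral_powerProfile_mul_of_nonneg
      (div_pos (alphaGaussianCoeff_pos hα hα1) hθ).le hfi hfρ
  · refine mul_nonneg (sub_pos.2 hα1).le (sub_nonneg.2 ?_)
    exact integral_add_le_integral_powerProfile_mul hf0 hfi hfρ

theorem FoldsToHalfLine.renyiEntropy_le_alphaGaussian_and_eq_iff {f : ℝ → ℝ}
    (hμ : FoldsToHalfLine μ C) (hC : 0 < C) (hρ : 0 < ρ) (hα : 1 < (1 + ρ) * α) (hα1 : α ≠ 1)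
    (hf0 : 0 ≤ᵐ[μ] f) (hf : ∫ x, f x ∂μ = 1) (hfα : Integrable (fun x => f x ^ α) μ)
    (hfθ : ∫ x, |x| ^ ρ * f x ∂μ = θ) (hθ : 0 < θ) :
    renyiEntropy μ α f ≤ renyiEntropy μ α (alphaGaussian μ ρ α θ) ∧
      (renyiEntropy μ α f = renyiEntropy μ α (alphaGaussian μ ρ α θ) ↔
        ∃ c > 0, f =ᵐ[μ] fun x => c * alphaProfile ρ α θ x ^ (1 / (α - 1))) := by
  have hα0 := pos_of_one_lt_one_add_mul hρ hα
  have hN := hμ.integral_alphaProfile_pos hC hρ hα hα1 hθ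
  have hG := hμ.integral_alphaProfile_rpow_pos hC hρ hα hα1 hθ
  have hfi : Integrable f μ := .of_integral_ne_zero (hf ▸ one_ne_zero)
  have hfρ : Integrable (fun x => |x| ^ ρ * f x) μ := .of_integral_ne_zero (hfθ ▸ hθ.ne')
  rw [← ae_eq_powDensity_iff hf hN]
  refine renyiEntropy_le_powDensity_and_eq_iff hα0 hα1 hf0
    (integral_rpow_pos hα0.ne' hf0 (hf ▸ one_ne_zero) hfα) (alphaProfile_nonneg ρ α θ)
    (fun h => alphaProfile_pos hα h hθ) hN hG (integrable_powerProfile_mul hf0 hfi hfρ) ?_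
  rw [hμ.integral_alphaProfile_rpow hρ hα hα1 hθ, mul_div_cancel_right₀ _ hN.ne']
  exact sub_one_mul_integral_alphaProfile_mul_sub_nonneg hα hα1 hf0 hf hfθ hθ

lemma FoldsToHalfLine.renyiEntropy_alphaGaussian (hμ : FoldsToHalfLine μ C) (hC : 0 < C)
    (hρ : 0 < ρ) (hα : 1 < (1 + ρ) * α) (hα1 : α ≠ 1) (hθ : 0 < θ) :
    renyiEntropy μ α (alphaGaussian μ ρ α θ) =
      log (∫ x, alphaProfile ρ α θ x ^ (1 / (α - 1)) ∂μ) +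
        1 / (1 - α) * log (ρ * α / ((1 + ρ) * α - 1)) := by
  have hN := hμ.integral_alphaProfile_pos hC hρ hα hα1 hθ
  have hG := hμ.integral_alphaProfile_rpow_pos hC hρ hα hα1 hθ
  rw [alphaGaussian, renyiEntropy_powDensity hα1 (alphaProfile_nonneg ρ α θ) hN hG,
    hμ.integral_alphaProfile_rpow hρ hα hα1 hθ, mul_div_cancel_right₀ _ hN.ne',
    one_add_alphaGaussianCoeff hα]

lemma FoldsToHalfLine.renyiEntropy_alphaGaussian_of_lt_one (hμ : FoldsToHalfLine μ C)
    (hC : 0 < C) (hρ : 0 < ρ) (hα : 1 < (1 + ρ) * α) (hα1 : α < 1) (hθ : 0 < θ) :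
    renyiEntropy μ α (alphaGaussian μ ρ α θ) =
      1 / ρ * log (((1 + ρ) * α - 1) / (1 - α) * θ) +
        1 / (1 - α) * log (ρ * α / ((1 + ρ) * α - 1)) +
          log (C * Gamma (1 / ρ + 1) * Gamma (1 / (1 - α) - 1 / ρ) / Gamma (1 / (1 - α))) := by
  have hN := hμ.integral_alphaProfile_pos hC hρ hα hα1.ne hθ
  have h_base : 0 < ((1 + ρ) * α - 1) / (1 - α) * θ :=
    mul_pos (div_pos (sub_pos.2 hα) (sub_pos.2 hα1)) hθ
  rw [hμ.renyiEntropy_alphaGaussian hC hρ hα hα1.ne hθ]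
  rw [hμ.integral_alphaProfile_of_lt_one hρ hα hα1 hθ] at hN ⊢
  rw [log_mul (left_ne_zero_of_mul hN.ne') (right_ne_zero_of_mul hN.ne'), log_rpow h_base,
    add_right_comm]

lemma FoldsToHalfLine.renyiEntropy_alphaGaussian_of_one_lt (hμ : FoldsToHalfLine μ C)
    (hC : 0 < C) (hρ : 0 < ρ) (hα : 1 < (1 + ρ) * α) (hα1 : 1 < α) (hθ : 0 < θ) :
    renyiEntropy μ α (alphaGaussian μ ρ α θ) =
      1 / ρ * log (((1 + ρ) * α - 1) / (α - 1) * θ) +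
        1 / (α - 1) * log (((1 + ρ) * α - 1) / (ρ * α)) +
          log (C * Gamma (1 / ρ + 1) * Gamma (α / (α - 1)) / Gamma (α / (α - 1) + 1 / ρ)) := by
  have hN := hμ.integral_alphaProfile_pos hC hρ hα hα1.ne' hθ
  have h_base : 0 < ((1 + ρ) * α - 1) / (α - 1) * θ :=
    mul_pos (div_pos (sub_pos.2 hα) (sub_pos.2 hα1)) hθ
  rw [hμ.renyiEntropy_alphaGaussian hC hρ hα hα1.ne' hθ]
  rw [hμ.integral_alphaProfile_of_one_lt hρ hα hα1 hθ] at hN ⊢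
  rw [log_mul (left_ne_zero_of_mul hN.ne') (right_ne_zero_of_mul hN.ne'), log_rpow h_base,
    add_right_comm, ← inv_div ((1 + ρ) * α - 1), log_inv, ← neg_sub α, one_div_neg_eq_neg_one_div,
    neg_mul_neg]

lemma renyiEntropy_le_alphaGaussian_Ioi {f : ℝ → ℝ} (hρ : 0 < ρ) (hα : 1 < (1 + ρ) * α)
    (hα1 : α ≠ 1) (hf0 : 0 ≤ᵐ[volume] f) (hf_neg : ∀ᵐ x : ℝ, x < 0 → f x = 0)
    (hf : ∫ x, f x = 1) (hfα : Integrable (fun x => f x ^ α))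
    (hfθ : ∫ x, |x| ^ ρ * f x = θ) (hθ : 0 < θ) :
    renyiEntropy volume α f ≤
      renyiEntropy (volume.restrict (Ioi 0)) α (alphaGaussian (volume.restrict (Ioi 0)) ρ α θ) := by
  have hα0 := pos_of_one_lt_one_add_mul hρ hα
  have hf_compl : ∀ᵐ x : ℝ, x ∉ Ioi 0 → f x = 0 := by
    filter_upwards [hf_neg, Measure.ae_ne volume 0] with x hx hx0 hx_mem
    exact hx (lt_of_le_of_ne (not_lt.1 hx_mem) hx0)
  rw [← renyiEntropy_restrict hα0.ne' hf_compl]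
  refine (foldsToHalfLine_restrict_Ioi.renyiEntropy_le_alphaGaussian_and_eq_iff one_pos hρ hα hα1
    (ae_restrict_of_ae hf0) ?_ hfα.restrict ?_ hθ).1
  · rw [setIntegral_eq_integral_of_ae_compl_eq_zero hf_compl, hf]
  · rw [setIntegral_eq_integral_of_ae_compl_eq_zero, hfθ]
    filter_upwards [hf_compl] with x hx hx_mem
    rw [hx hx_mem, mul_zero]

end alphaGaussian

/-- Maximum Rényi-entropy bound for a fixed `ρ`-th absolute moment (Theorem `lem-three`):
bounds on `h_α(𝒳)` for `1/(1+ρ) < α < 1` and for `α > 1`, with equality iff `𝒳` is a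
generalized α-Gaussian, and the corresponding one-sided versions (`𝒳 ≥ 0` a.s.) with the
factor `2` inside the last logarithm removed. -/
theorem maxent_renyi_rho_moment
    (ρ α : ℝ) (hρ : 0 < ρ) (hα0 : 0 < α) (hα1 : α ≠ 1)
    (f : ℝ → ℝ) (hfm : Measurable f) (hf0 : ∀ x, 0 ≤ f x)
    (hf1 : ∫ x, f x = 1) (hfi : Integrable f)
    (hfα : Integrable (fun x => f x ^ α))
    (θ : ℝ) (hθ : θ = ∫ x, |x| ^ ρ * f x) (hθi : Integrable (fun x => |x| ^ ρ * f x)) :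
    ((1 / (1 + ρ) < α ∧ α < 1) →
      ((1 / (1 - α)) * Real.log (∫ x, f x ^ α) ≤
          (1 / ρ) * Real.log (((1 + ρ) * α - 1) / (1 - α) * θ)
            + (1 / (1 - α)) * Real.log (ρ * α / ((1 + ρ) * α - 1))
            + Real.log (2 * Real.Gamma (1 / ρ + 1) * Real.Gamma (1 / (1 - α) - 1 / ρ)
                / Real.Gamma (1 / (1 - α))) ∧
        ((1 / (1 - α)) * Real.log (∫ x, f x ^ α) =
            (1 / ρ) * Real.log (((1 + ρ) * α - 1) / (1 - α) * θ)
              + (1 / (1 - α)) * Real.log (ρ * α / ((1 + ρ) * α - 1))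
              + Real.log (2 * Real.Gamma (1 / ρ + 1) * Real.Gamma (1 / (1 - α) - 1 / ρ)
                  / Real.Gamma (1 / (1 - α))) ↔
          ∃ c > 0, f =ᵐ[volume] fun x =>
            c * (max (1 + (1 - α) / ((1 + ρ) * α - 1) * |x| ^ ρ / θ) 0) ^ (1 / (α - 1))))) ∧
    (1 < α →
      ((1 / (1 - α)) * Real.log (∫ x, f x ^ α) ≤
          (1 / ρ) * Real.log (((1 + ρ) * α - 1) / (α - 1) * θ)
            + (1 / (α - 1)) * Real.log (((1 + ρ) * α - 1) / (ρ * α))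
            + Real.log (2 * Real.Gamma (1 / ρ + 1) * Real.Gamma (α / (α - 1))
                / Real.Gamma (α / (α - 1) + 1 / ρ)) ∧
        ((1 / (1 - α)) * Real.log (∫ x, f x ^ α) =
            (1 / ρ) * Real.log (((1 + ρ) * α - 1) / (α - 1) * θ)
              + (1 / (α - 1)) * Real.log (((1 + ρ) * α - 1) / (ρ * α))
              + Real.log (2 * Real.Gamma (1 / ρ + 1) * Real.Gamma (α / (α - 1))
                  / Real.Gamma (α / (α - 1) + 1 / ρ)) ↔
          ∃ c > 0, f =ᵐ[volume] fun x =>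
            c * (max (1 + (1 - α) / ((1 + ρ) * α - 1) * |x| ^ ρ / θ) 0) ^ (1 / (α - 1))))) ∧
    ((∀ᵐ x ∂(volume : Measure ℝ), x < 0 → f x = 0) →
      ((1 / (1 + ρ) < α ∧ α < 1) →
        (1 / (1 - α)) * Real.log (∫ x, f x ^ α) ≤
          (1 / ρ) * Real.log (((1 + ρ) * α - 1) / (1 - α) * θ)
            + (1 / (1 - α)) * Real.log (ρ * α / ((1 + ρ) * α - 1))
            + Real.log (Real.Gamma (1 / ρ + 1) * Real.Gamma (1 / (1 - α) - 1 / ρ)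
                / Real.Gamma (1 / (1 - α)))) ∧
      (1 < α →
        (1 / (1 - α)) * Real.log (∫ x, f x ^ α) ≤
          (1 / ρ) * Real.log (((1 + ρ) * α - 1) / (α - 1) * θ)
            + (1 / (α - 1)) * Real.log (((1 + ρ) * α - 1) / (ρ * α))
            + Real.log (Real.Gamma (1 / ρ + 1) * Real.Gamma (α / (α - 1))
                / Real.Gamma (α / (α - 1) + 1 / ρ)))) := by
  have hf0' : 0 ≤ᵐ[volume] f := .of_forall hf0
  have hθ0 : 0 < θ := hθ ▸ integral_abs_rpow_mul_pos hf0' (hf1 ▸ one_ne_zero) hθi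
  have one_lt_of_div_lt (h : 1 / (1 + ρ) < α) : 1 < (1 + ρ) * α :=
    (div_lt_iff₀' (by positivity)).1 h
  have one_lt_of_one_lt (h : 1 < α) : 1 < (1 + ρ) * α := by nlinarith
  have on_line (hα : 1 < (1 + ρ) * α) :=
    foldsToHalfLine_volume.renyiEntropy_le_alphaGaussian_and_eq_iff two_pos hρ hα hα1 hf0' hf1 hfα
      hθ.symm hθ0
  have on_half_line (hα : 1 < (1 + ρ) * α) (hf_neg : ∀ᵐ x : ℝ, x < 0 → f x = 0) :=
    renyiEntropy_le_alphaGaussian_Ioi hρ hα hα1 hf0' hf_neg hf1 hfα hθ.symm hθ0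
  simp only [alphaProfile_apply] at on_line
  refine ⟨fun ⟨hα, hα1⟩ => ?_, fun hα => ?_, fun hf_neg => ⟨fun ⟨hα, hα1⟩ => ?_, fun hα => ?_⟩⟩
  · rw [← foldsToHalfLine_volume.renyiEntropy_alphaGaussian_of_lt_one two_pos hρ
      (one_lt_of_div_lt hα) hα1 hθ0]
    exact on_line (one_lt_of_div_lt hα)
  · rw [← foldsToHalfLine_volume.renyiEntropy_alphaGaussian_of_one_lt two_pos hρ
      (one_lt_of_one_lt hα) hα hθ0]
    exact on_line (one_lt_of_one_lt hα)
  · rw [← one_mul (Gamma (1 / ρ + 1)),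
      ← foldsToHalfLine_restrict_Ioi.renyiEntropy_alphaGaussian_of_lt_one one_pos hρ
        (one_lt_of_div_lt hα) hα1 hθ0]
    exact on_half_line (one_lt_of_div_lt hα) hf_neg
  · rw [← one_mul (Gamma (1 / ρ + 1)),
      ← foldsToHalfLine_restrict_Ioi.renyiEntropy_alphaGaussian_of_one_lt one_pos hρ
        (one_lt_of_one_lt hα) hα hθ0]
    exact on_half_line (one_lt_of_one_lt hα) hf_neg
end

section
/- Let X be a discrete random variable taking countably many real values, let T : ℝ → [0, ∞) be measurable with Z = ∫ e^{−T(x)} dx finite and positive, let f(x) = e^{−T(x)}/Z, and let 𝒳 be a continuous real random variable with density f such that E[T(X)] = E[T(𝒳)] = m is finite. Then H(X) ≤ h(𝒳) + ln Z′, where Z′ = Σ_x f(x), the sum being over all values x taken by X. -/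
/-!
Gibbs' inequality bounds the entropy of `p` by its cross-entropy relative to the weights `f (v i)`,
up to the logarithm of their total mass `Z'`. Since `-log f = T + log Z` is affine in `T`, this
cross-entropy depends on `p` only through `E[T(X)]`: it equals `E[T(X)] + log Z`, and likewise
`h(𝒳) = E[T(𝒳)] + log Z`.
-/

open MeasureTheory Real

/-- This holds because a divergent series has `tsum` equal to `0`. -/
lemma hasSum_of_tsum_eq_of_ne_zero {ι M : Type*} [AddCommMonoid M] [TopologicalSpace M]
    {f : ι → M} {a : M} (h : ∑' i, f i = a) (ha : a ≠ 0) : HasSum f a :=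
  h ▸ (not_imp_comm.1 tsum_eq_zero_of_not_summable (h.trans_ne ha)).hasSum

section Gibbs

variable {ι : Type*} {p q : ι → ℝ}

/-- The Shannon entropy, in nats, of the probability mass function `p`; it is `0` when the series
diverges. -/
noncomputable def shannonEntropy (p : ι → ℝ) : ℝ := ∑' i, negMulLog (p i)

lemma mul_log_one_div_eq_negMulLog (x : ℝ) : x * log (1 / x) = negMulLog x := by
  rw [one_div, log_inv, mul_neg, negMulLog, neg_mul]

lemma negMulLog_le_neg_mul_log_add_sub {x y : ℝ} (hx : 0 ≤ x) (hy : 0 ≤ y) (hyx : y = 0 → x = 0) :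
    negMulLog x ≤ -(x * log y) + (y - x) := by
  rcases hy.eq_or_lt with rfl | hy
  · simp [hyx rfl]
  · calc negMulLog x = negMulLog (y * (x / y)) := by rw [mul_div_cancel₀ x hy.ne']
      _ = x / y * negMulLog y + y * negMulLog (x / y) := negMulLog_mul y (x / y)
      _ ≤ x / y * negMulLog y + y * (1 - x / y) := by
        gcongr
        exact negMulLog_le_one_sub_self (by positivity)
      _ = -(x * log y) + (y - x) := by
        rw [negMulLog]
        field_simp

lemma summable_negMulLog_of_summable_mul_log (hp0 : ∀ i, 0 ≤ p i) (hp : HasSum p 1)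
    (hq0 : ∀ i, 0 ≤ q i) (hqp : ∀ i, q i = 0 → p i = 0) (hq : Summable q)
    (hpq : Summable fun i => p i * log (q i)) : Summable fun i => negMulLog (p i) :=
  .of_nonneg_of_le
    (fun i => negMulLog_nonneg (hp0 i) (le_hasSum hp i fun j _ => hp0 j))
    (fun i => negMulLog_le_neg_mul_log_add_sub (hp0 i) (hq0 i) (hqp i))
    (hpq.neg.add (hq.sub hp.summable))

lemma shannonEntropy_le_neg_tsum_mul_log (hp0 : ∀ i, 0 ≤ p i) (hp : HasSum p 1)
    (hq0 : ∀ i, 0 ≤ q i) (hqp : ∀ i, q i = 0 → p i = 0) (hq : Summable q)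
    (hq1 : ∑' i, q i ≤ 1) (hpq : Summable fun i => p i * log (q i)) :
    shannonEntropy p ≤ -∑' i, p i * log (q i) := by
  have hle : shannonEntropy p ≤ -∑' i, p i * log (q i) + (∑' i, q i - 1) :=
    hasSum_le (fun i => negMulLog_le_neg_mul_log_add_sub (hp0 i) (hq0 i) (hqp i))
      (summable_negMulLog_of_summable_mul_log hp0 hp hq0 hqp hq hpq).hasSum
      (hpq.hasSum.neg.add (hq.hasSum.sub hp))
  linarith

lemma shannonEntropy_le_neg_tsum_mul_log_add_log_tsum (hp0 : ∀ i, 0 ≤ p i) (hp : HasSum p 1)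
    (hq0 : ∀ i, 0 ≤ q i) (hqp : ∀ i, q i = 0 → p i = 0) (hq : Summable q)
    (hpq : Summable fun i => p i * log (q i)) :
    shannonEntropy p ≤ -∑' i, p i * log (q i) + log (∑' i, q i) := by
  set Q := ∑' i, q i with hQ
  have hQpos : 0 < Q := by
    obtain ⟨i, hi⟩ : ∃ i, p i ≠ 0 := by
      by_contra! h
      exact one_ne_zero (hp.unique (funext h ▸ hasSum_zero))
    exact hq.tsum_pos hq0 i ((hq0 i).lt_of_ne' (mt (hqp i) hi))
  have hlog (i : ι) : p i * log (q i / Q) = p i * log (q i) - p i * log Q := by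
    by_cases hi : q i = 0
    · simp [hqp i hi]
    · rw [log_div hi hQpos.ne', mul_sub]
  have hsum : HasSum (fun i => p i * log (q i / Q)) (∑' i, p i * log (q i) - 1 * log Q) := by
    simpa only [hlog] using hpq.hasSum.sub (hp.mul_right (log Q))
  have hgibbs : shannonEntropy p ≤ -∑' i, p i * log (q i / Q) :=
    shannonEntropy_le_neg_tsum_mul_log hp0 hp (fun i => div_nonneg (hq0 i) hQpos.le)
      (fun i hi => hqp i ((div_eq_zero_iff.1 hi).resolve_right hQpos.ne')) (hq.div_const Q)
      (by rw [tsum_div_const, ← hQ, div_self hQpos.ne']) hsum.summable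
  rw [hsum.tsum_eq] at hgibbs
  linarith

end Gibbs

section GibbsDensity

variable {α : Type*} [MeasurableSpace α] {μ : Measure α} {T : α → ℝ}

/-- The differential entropy, in nats, of a random variable with density `f` with respect to `μ`;
it is `0` when the integral does not converge. -/
noncomputable def differentialEntropy (μ : Measure α) (f : α → ℝ) : ℝ := ∫ x, negMulLog (f x) ∂μ

/-- The Gibbs (maximum entropy) density `e^{-T} / Z` with respect to `μ`, where `Z = ∫ e^{-T} ∂μ` is
the partition function. It is identically `0` when `e^{-T}` is not integrable. -/
noncomputable def gibbsDensity (μ : Measure α) (T : α → ℝ) (x : α) : ℝ :=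
  exp (-T x) / ∫ y, exp (-T y) ∂μ

lemma gibbsDensity_pos (hZ : 0 < ∫ y, exp (-T y) ∂μ) (x : α) : 0 < gibbsDensity μ T x :=
  div_pos (exp_pos _) hZ

lemma log_gibbsDensity (hZ : 0 < ∫ y, exp (-T y) ∂μ) (x : α) :
    log (gibbsDensity μ T x) = -(T x + log (∫ y, exp (-T y) ∂μ)) := by
  rw [gibbsDensity, log_div (exp_ne_zero _) hZ.ne', log_exp]
  ring

lemma integrable_gibbsDensity (hZ : 0 < ∫ y, exp (-T y) ∂μ) : Integrable (gibbsDensity μ T) μ :=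
  (Integrable.of_integral_ne_zero hZ.ne').div_const _

lemma integral_gibbsDensity (hZ : 0 < ∫ y, exp (-T y) ∂μ) : ∫ x, gibbsDensity μ T x ∂μ = 1 := by
  simp only [gibbsDensity, integral_div, div_self hZ.ne']

lemma differentialEntropy_gibbsDensity (hZ : 0 < ∫ y, exp (-T y) ∂μ)
    (hT : Integrable (fun x => T x * gibbsDensity μ T x) μ) :
    differentialEntropy μ (gibbsDensity μ T) =
      ∫ x, T x * gibbsDensity μ T x ∂μ + log (∫ y, exp (-T y) ∂μ) := by
  have hpoint (x : α) : negMulLog (gibbsDensity μ T x) =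
      T x * gibbsDensity μ T x + gibbsDensity μ T x * log (∫ y, exp (-T y) ∂μ) := by
    rw [negMulLog, log_gibbsDensity hZ]
    ring
  simp only [differentialEntropy, hpoint]
  rw [integral_add hT ((integrable_gibbsDensity hZ).mul_const _), integral_mul_const,
    integral_gibbsDensity hZ, one_mul]

lemma hasSum_mul_log_gibbsDensity {ι : Type*} {v : ι → α} {p : ι → ℝ}
    (hZ : 0 < ∫ y, exp (-T y) ∂μ) (hp : HasSum p 1) (hT : Summable fun i => T (v i) * p i) :
    HasSum (fun i => p i * log (gibbsDensity μ T (v i)))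
      (-(∑' i, T (v i) * p i + log (∫ y, exp (-T y) ∂μ))) := by
  convert! (hT.hasSum.add (hp.mul_right (log (∫ y, exp (-T y) ∂μ)))).neg using 1
  · funext i
    rw [log_gibbsDensity hZ]
    ring
  · rw [one_mul]

theorem mixed_kullback_inequality_general {ι : Type*} {v : ι → α} {p : ι → ℝ}
    (hp0 : ∀ i, 0 ≤ p i) (hp : HasSum p 1) (hZ : 0 < ∫ y, exp (-T y) ∂μ)
    (hTp : Summable fun i => T (v i) * p i)
    (hTi : Integrable (fun x => T x * gibbsDensity μ T x) μ)
    (hle : ∑' i, T (v i) * p i ≤ ∫ x, T x * gibbsDensity μ T x ∂μ)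
    (hq : Summable fun i => gibbsDensity μ T (v i)) :
    shannonEntropy p ≤
      differentialEntropy μ (gibbsDensity μ T) + log (∑' i, gibbsDensity μ T (v i)) := by
  have hpos (i : ι) : 0 < gibbsDensity μ T (v i) := gibbsDensity_pos hZ (v i)
  have hcross := hasSum_mul_log_gibbsDensity hZ hp hTp
  calc shannonEntropy p
      ≤ -∑' i, p i * log (gibbsDensity μ T (v i)) + log (∑' i, gibbsDensity μ T (v i)) :=
        shannonEntropy_le_neg_tsum_mul_log_add_log_tsum hp0 hp (fun i => (hpos i).le)
          (fun i hi => absurd hi (hpos i).ne') hq hcross.summable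
    _ = ∑' i, T (v i) * p i + log (∫ y, exp (-T y) ∂μ) +
          log (∑' i, gibbsDensity μ T (v i)) := by rw [hcross.tsum_eq, neg_neg]
    _ ≤ ∫ x, T x * gibbsDensity μ T x ∂μ + log (∫ y, exp (-T y) ∂μ) +
          log (∑' i, gibbsDensity μ T (v i)) := by gcongr
    _ = differentialEntropy μ (gibbsDensity μ T) + log (∑' i, gibbsDensity μ T (v i)) := by
        rw [differentialEntropy_gibbsDensity hZ hTi]

end GibbsDensity

/-- Mixed discrete-continuous Kullback-type inequality: if `X` is a discrete random variable
taking countably many real values `v i` with probabilities `p i`, `f(x) = e^{-T(x)}/Z`, and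
`𝒳` has density `f` with `E[T(X)] = E[T(𝒳)] = m` finite, then
`H(X) ≤ h(𝒳) + ln Z'` where `Z' = Σ_x f(x)` over the values of `X`. -/
theorem mixed_kullback_inequality
    {ι : Type*} [Countable ι] (v : ι → ℝ) (hv : Function.Injective v)
    (p : ι → ℝ) (hp0 : ∀ i, 0 ≤ p i) (hp1 : ∑' i, p i = 1)
    (T : ℝ → ℝ) (hTm : Measurable T) (hT0 : ∀ x, 0 ≤ T x)
    (Z : ℝ) (hZ : Z = ∫ x, Real.exp (-T x))
    (hZi : Integrable (fun x => Real.exp (-T x))) (hZpos : 0 < Z)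
    (f : ℝ → ℝ) (hf : f = fun x => Real.exp (-T x) / Z)
    (m : ℝ) (hmX : m = ∑' i, T (v i) * p i) (hms : Summable (fun i => T (v i) * p i))
    (hm𝒳 : m = ∫ x, T x * f x) (hmi : Integrable (fun x => T x * f x))
    (hZ's : Summable (fun i => f (v i))) :
    (∑' i, p i * Real.log (1 / p i)) ≤
      (∫ x, f x * Real.log (1 / f x)) + Real.log (∑' i, f (v i)) := by
  subst hf hZ
  simp only [mul_log_one_div_eq_negMulLog]
  exact mixed_kullback_inequality_general hp0 (hasSum_of_tsum_eq_of_ne_zero hp1 one_ne_zero)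
    hZpos hms hmi (hmX.symm.trans hm𝒳).le hZ's
end
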